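/- Let φ, Φ: S_{m−1} → S_m be defined by φ(π_1⋯π_{m−1}) = (π_1+1)(π_2+1)⋯(π_{m−1}+1)·1 and Φ(π_1⋯π_{m−1}) = π_1π_2⋯π_{m−1}·m. For every n ≥ 5, the set S_n(∅;{132,312}) of permutations of {1,…,n} containing each of 132 and 312 exactly once equals {φ(π) : π ∈ S_{n−1}(∅;{132,312})} ∪ {Φ(π) : π ∈ S_{n−1}(∅;{132,312})}; moreover S_4(∅;{132,312}) = {2413, 3142}. -/

import Mathlib

/-- Number of occurrences of the pattern `α ∈ S_k` in the permutation `π ∈ S_n`: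
the number of strictly increasing choices of `k` indices such that the corresponding
subword of `π` is order-isomorphic to `α`. -/
noncomputable def occCount {k n : ℕ} (α : Equiv.Perm (Fin k)) (π : Equiv.Perm (Fin n)) : ℕ :=
  Nat.card {f : Fin k → Fin n // StrictMono f ∧ ∀ a b : Fin k, α a < α b ↔ π (f a) < π (f b)}

/-- `π` avoids the pattern `α`. -/
def avoids {k n : ℕ} (α : Equiv.Perm (Fin k)) (π : Equiv.Perm (Fin n)) : Prop :=
  occCount α π = 0

/-- `π` contains the pattern `α` exactly once. -/
def containsOnce {k n : ℕ} (α : Equiv.Perm (Fin k)) (π : Equiv.Perm (Fin n)) : Prop :=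
  occCount α π = 1

/-- The pattern `123` (as a permutation of `Fin 3`, 0-indexed). -/
def p123 : Equiv.Perm (Fin 3) := ⟨![0,1,2], ![0,1,2], by decide, by decide⟩
/-- The pattern `132`. -/
def p132 : Equiv.Perm (Fin 3) := ⟨![0,2,1], ![0,2,1], by decide, by decide⟩
/-- The pattern `213`. -/
def p213 : Equiv.Perm (Fin 3) := ⟨![1,0,2], ![1,0,2], by decide, by decide⟩
/-- The pattern `231`. -/
def p231 : Equiv.Perm (Fin 3) := ⟨![1,2,0], ![2,0,1], by decide, by decide⟩
/-- The pattern `312`. -/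
def p312 : Equiv.Perm (Fin 3) := ⟨![2,0,1], ![1,2,0], by decide, by decide⟩
/-- The pattern `321`. -/
def p321 : Equiv.Perm (Fin 3) := ⟨![2,1,0], ![2,1,0], by decide, by decide⟩

/-- `s_n(α;β)`: the number of permutations of `{1,…,n}` that avoid `α` and contain `β`
exactly once. -/
noncomputable def sAvoidContain (α β : Equiv.Perm (Fin 3)) (n : ℕ) : ℕ :=
  Nat.card {π : Equiv.Perm (Fin n) // avoids α π ∧ containsOnce β π}

/-- `s_n(∅;{α,β})`: the number of permutations of `{1,…,n}` that contain each of `α` and `β`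
exactly once. -/
noncomputable def sContainBoth (α β : Equiv.Perm (Fin 3)) (n : ℕ) : ℕ :=
  Nat.card {π : Equiv.Perm (Fin n) // containsOnce α π ∧ containsOnce β π}

/-- `φ : S_m → S_{m+1}` appends a new smallest element at the end:
`φ(π₁…π_m) = (π₁+1)(π₂+1)⋯(π_m+1)·1`. -/
def phi {m : ℕ} (π : Equiv.Perm (Fin m)) : Equiv.Perm (Fin (m + 1)) where
  toFun i := Fin.lastCases 0 (fun j => (π j).succ) i
  invFun v := Fin.cases (Fin.last m) (fun j => (π.symm j).castSucc) v
  left_inv i := by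
    induction i using Fin.lastCases with
    | last => simp
    | cast j => simp
  right_inv v := by
    induction v using Fin.cases with
    | zero => simp
    | succ j => simp

/-- `Φ : S_m → S_{m+1}` appends a new largest element at the end:
`Φ(π₁…π_m) = π₁π₂⋯π_m·(m+1)`. -/
def Phi {m : ℕ} (π : Equiv.Perm (Fin m)) : Equiv.Perm (Fin (m + 1)) where
  toFun i := Fin.lastCases (Fin.last m) (fun j => (π j).castSucc) i
  invFun v := Fin.lastCases (Fin.last m) (fun j => (π.symm j).castSucc) v
  left_inv i := by
    induction i using Fin.lastCases with
    | last => simp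
    | cast j => simp
  right_inv v := by
    induction v using Fin.lastCases with
    | last => simp
    | cast j => simp

/-- `S_n(α;β)`: the set of permutations of `{1,…,n}` avoiding `α` and containing `β`
exactly once. -/
def SnAvoidContain (α β : Equiv.Perm (Fin 3)) (n : ℕ) : Set (Equiv.Perm (Fin n)) :=
  {π | avoids α π ∧ containsOnce β π}

/-- `S_n(∅;{α,β})`: the set of permutations of `{1,…,n}` containing each of `α` and `β`
exactly once. -/
def SnContainBoth (α β : Equiv.Perm (Fin 3)) (n : ℕ) : Set (Equiv.Perm (Fin n)) :=
  {π | containsOnce α π ∧ containsOnce β π}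

/-- `π` is the permutation whose one-line word (1-indexed positions, values in `{1,…,n}`)
is given by `w`. -/
def hasWord {n : ℕ} (π : Equiv.Perm (Fin n)) (w : ℕ → ℕ) : Prop :=
  ∀ j : Fin n, (π j : ℕ) + 1 = w ((j : ℕ) + 1)

/-- The permutation with one-line word `2413`. -/
def w2413 : Equiv.Perm (Fin 4) := ⟨![1,3,0,2], ![2,0,3,1], by decide, by decide⟩
/-- The permutation with one-line word `3142`. -/
def w3142 : Equiv.Perm (Fin 4) := ⟨![2,0,3,1], ![1,3,0,2], by decide, by decide⟩

/-- Occurrence of 132 at a triple of positions. -/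
def OccA {n : ℕ} (π : Equiv.Perm (Fin n)) (t : Fin n × Fin n × Fin n) : Prop :=
  t.1 < t.2.1 ∧ t.2.1 < t.2.2 ∧ π t.1 < π t.2.2 ∧ π t.2.2 < π t.2.1

/-- Occurrence of 312 at a triple of positions. -/
def OccB {n : ℕ} (π : Equiv.Perm (Fin n)) (t : Fin n × Fin n × Fin n) : Prop :=
  t.1 < t.2.1 ∧ t.2.1 < t.2.2 ∧ π t.2.1 < π t.2.2 ∧ π t.2.2 < π t.1

instance {n : ℕ} (π : Equiv.Perm (Fin n)) : DecidablePred (OccA π) := fun _ => by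
  unfold OccA; infer_instance

instance {n : ℕ} (π : Equiv.Perm (Fin n)) : DecidablePred (OccB π) := fun _ => by
  unfold OccB; infer_instance

/-- functions on three points as triples -/
def tripEquiv (X : Type) : (Fin 3 → X) ≃ X × X × X where
  toFun f := (f 0, f 1, f 2)
  invFun t := ![t.1, t.2.1, t.2.2]
  left_inv f := by ext i; fin_cases i <;> rfl
  right_inv t := rfl

lemma mono3 {n : ℕ} (f : Fin 3 → Fin n) : StrictMono f ↔ f 0 < f 1 ∧ f 1 < f 2 := by
  rw [Fin.strictMono_iff_lt_succ]
  simp [Fin.forall_fin_succ]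

lemma onceA {n : ℕ} (π : Equiv.Perm (Fin n)) :
    containsOnce p132 π ↔ Nat.card {t // OccA π t} = 1 := by
  unfold containsOnce occCount
  rw [Nat.card_congr ((tripEquiv (Fin n)).subtypeEquiv (q := OccA π) ?_)]
  intro f
  change _ ↔ f 0 < f 1 ∧ f 1 < f 2 ∧ π (f 0) < π (f 2) ∧ π (f 2) < π (f 1)
  rw [mono3]
  simp [p132, Fin.forall_fin_succ]
  omega

lemma onceB {n : ℕ} (π : Equiv.Perm (Fin n)) :
    containsOnce p312 π ↔ Nat.card {t // OccB π t} = 1 := by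
  unfold containsOnce occCount
  rw [Nat.card_congr ((tripEquiv (Fin n)).subtypeEquiv (q := OccB π) ?_)]
  intro f
  change _ ↔ f 0 < f 1 ∧ f 1 < f 2 ∧ π (f 1) < π (f 2) ∧ π (f 2) < π (f 0)
  rw [mono3]
  simp [p312, Fin.forall_fin_succ]
  omega

/-- embedding of triples -/
def embT {m : ℕ} (t : Fin m × Fin m × Fin m) : Fin (m+1) × Fin (m+1) × Fin (m+1) :=
  (t.1.castSucc, t.2.1.castSucc, t.2.2.castSucc)

lemma embT_inj {m : ℕ} : Function.Injective (embT (m := m)) := by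
  rintro ⟨a, b, c⟩ ⟨a', b', c'⟩ h
  simpa [embT] using h

lemma card_transfer {m : ℕ} (P : Fin m × Fin m × Fin m → Prop)
    (Q : Fin (m+1) × Fin (m+1) × Fin (m+1) → Prop)
    (h1 : ∀ t, Q (embT t) ↔ P t)
    (h2 : ∀ t, Q t → t.1 < t.2.1 ∧ t.2.1 < t.2.2 ∧ t.2.2 ≠ Fin.last m) :
    Nat.card {t // Q t} = Nat.card {t // P t} := by
  symm
  refine Nat.card_congr (Equiv.ofBijective
    (fun t : {t // P t} => (⟨embT t.1, (h1 _).2 t.2⟩ : {t // Q t})) ⟨?_, ?_⟩)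
  · intro a b h
    exact Subtype.ext (embT_inj (congrArg Subtype.val h))
  · rintro ⟨⟨a, b, c⟩, h⟩
    obtain ⟨hab, hbc, hc⟩ := h2 _ h
    simp only at hab hbc hc
    obtain ⟨c, rfl⟩ := Fin.exists_castSucc_eq.2 hc
    obtain ⟨b, rfl⟩ := Fin.exists_castSucc_eq.2 (ne_of_lt (hbc.trans_le (Fin.le_last _)))
    obtain ⟨a, rfl⟩ := Fin.exists_castSucc_eq.2 (ne_of_lt (hab.trans_le (Fin.le_last _)))
    exact ⟨⟨(a, b, c), (h1 _).1 h⟩, rfl⟩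

lemma phi_mem {m : ℕ} (π : Equiv.Perm (Fin m)) :
    phi π ∈ SnContainBoth p132 p312 (m+1) ↔ π ∈ SnContainBoth p132 p312 m := by
  simp only [SnContainBoth, Set.mem_ofPred_eq, onceA, onceB]
  rw [card_transfer (OccA π) (OccA (phi π)), card_transfer (OccB π) (OccB (phi π))]
  · intro t; simp [OccB, embT, phi]
  · rintro ⟨a, b, c⟩ ⟨h1, h2, h3, h4⟩
    refine ⟨h1, h2, ?_⟩
    rintro rfl
    simp [phi] at h3
  · intro t; simp [OccA, embT, phi]
  · rintro ⟨a, b, c⟩ ⟨h1, h2, h3, h4⟩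
    refine ⟨h1, h2, ?_⟩
    rintro rfl
    simp [phi] at h3

lemma Phi_mem {m : ℕ} (π : Equiv.Perm (Fin m)) :
    Phi π ∈ SnContainBoth p132 p312 (m+1) ↔ π ∈ SnContainBoth p132 p312 m := by
  simp only [SnContainBoth, Set.mem_ofPred_eq, onceA, onceB]
  rw [card_transfer (OccA π) (OccA (Phi π)), card_transfer (OccB π) (OccB (Phi π))]
  · intro t; simp [OccB, embT, Phi]
  · rintro ⟨a, b, c⟩ ⟨h1, h2, h3, h4⟩
    refine ⟨h1, h2, ?_⟩
    rintro rfl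
    simp [Phi, Fin.not_lt.2 (Fin.le_last _)] at h4
  · intro t; simp [OccA, embT, Phi]
  · rintro ⟨a, b, c⟩ ⟨h1, h2, h3, h4⟩
    refine ⟨h1, h2, ?_⟩
    rintro rfl
    simp [Phi, Fin.not_lt.2 (Fin.le_last _)] at h4

lemma exists_phi {m : ℕ} (π : Equiv.Perm (Fin (m+1))) (h : π (Fin.last m) = 0) :
    ∃ σ, phi σ = π := by
  have hne : ∀ j : Fin m, π j.castSucc ≠ 0 := fun j hj =>
    (Fin.castSucc_lt_last j).ne (π.injective (hj.trans h.symm))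
  refine ⟨Equiv.ofBijective (fun j => (π j.castSucc).pred (hne j))
    (Finite.injective_iff_bijective.1 ?_), ?_⟩
  · intro a b hab
    simpa using hab
  · ext i
    induction i using Fin.lastCases with
    | last => simp [phi, h]
    | cast j => simp [phi]

lemma exists_Phi {m : ℕ} (π : Equiv.Perm (Fin (m+1))) (h : π (Fin.last m) = Fin.last m) :
    ∃ σ, Phi σ = π := by
  have hne : ∀ j : Fin m, π j.castSucc ≠ Fin.last m := fun j hj =>
    (Fin.castSucc_lt_last j).ne (π.injective (hj.trans h.symm))
  refine ⟨Equiv.ofBijective (fun j => (π j.castSucc).castPred (hne j))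
    (Finite.injective_iff_bijective.1 ?_), ?_⟩
  · intro a b hab
    simpa using hab
  · ext i
    induction i using Fin.lastCases with
    | last => simp [Phi, h]
    | cast j => simp [Phi]

lemma card_one_eq {X : Type} {P : X → Prop} (h : Nat.card {x // P x} = 1) :
    ∃ a, ∀ x, P x → x = a := by
  obtain ⟨hs, ⟨a⟩⟩ := Nat.card_eq_one_iff_unique.1 h
  exact ⟨a.1, fun x hx => congrArg Subtype.val (hs.elim ⟨x, hx⟩ a)⟩

lemma last_extreme {m : ℕ} (hm : 5 ≤ m + 1) (π : Equiv.Perm (Fin (m+1)))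
    (h : π ∈ SnContainBoth p132 p312 (m+1)) :
    π (Fin.last m) = 0 ∨ π (Fin.last m) = Fin.last m := by
  simp only [SnContainBoth, Set.mem_ofPred_eq, onceA, onceB] at h
  obtain ⟨⟨i, j, e⟩, hA⟩ := card_one_eq h.1
  obtain ⟨⟨k, l, e'⟩, hB⟩ := card_one_eq h.2
  by_contra hcon
  push Not at hcon
  obtain ⟨v, hv⟩ : ∃ v, v = π (Fin.last m) := ⟨_, rfl⟩
  rw [← hv] at hcon
  have key : ∀ x y : Fin (m+1), x < v → v < y →
      (x = π i ∧ y = π j) ∨ (x = π l ∧ y = π k) := by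
    intro x y hx hy
    have hxl : π.symm x ≠ Fin.last m := by
      intro hh
      rw [← hh] at hv; simp at hv; omega
    have hyl : π.symm y ≠ Fin.last m := by
      intro hh
      rw [← hh] at hv; simp at hv; omega
    have hxy : π.symm x ≠ π.symm y := by
      intro hh
      have := π.symm.injective hh
      omega
    rcases lt_or_gt_of_ne hxy with hlt | hlt
    · have := hA (π.symm x, π.symm y, Fin.last m)
        ⟨hlt, lt_of_le_of_ne (Fin.le_last _) hyl, by simpa [← hv] using hx, by simpa [← hv] using hy⟩
      simp only [Prod.mk.injEq] at this
      left
      simp [← this.1, ← this.2.1]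
    · have := hB (π.symm y, π.symm x, Fin.last m)
        ⟨hlt, lt_of_le_of_ne (Fin.le_last _) hxl, by simpa [← hv] using hx, by simpa [← hv] using hy⟩
      simp only [Prod.mk.injEq] at this
      right
      simp [← this.1, ← this.2.1]
  have key' : ∀ x y : ℕ, x < v → v < y → y < m + 1 →
      (x = (π i : ℕ) ∧ y = (π j : ℕ)) ∨ (x = (π l : ℕ) ∧ y = (π k : ℕ)) := by
    intro x y hx hy hym
    have := key ⟨x, by omega⟩ ⟨y, hym⟩ hx hy
    simpa [Fin.ext_iff] using this
  have h0 : (v : ℕ) ≠ 0 := fun hh => hcon.1 (Fin.ext (by simpa using hh))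
  have h1 : (v : ℕ) ≠ m := fun hh => hcon.2 (Fin.ext (by simpa using hh))
  have hvm := v.2
  rcases (by omega : (v : ℕ) = 1 ∨ (v : ℕ) = 2 ∨ 3 ≤ (v : ℕ)) with h2 | h2 | h2
  · have a := key' 0 2 (by omega) (by omega) (by omega)
    have b := key' 0 3 (by omega) (by omega) (by omega)
    have c := key' 0 4 (by omega) (by omega) (by omega)
    omega
  · have a := key' 0 3 (by omega) (by omega) (by omega)
    have b := key' 0 4 (by omega) (by omega) (by omega)
    have c := key' 1 3 (by omega) (by omega) (by omega)
    omega
  · have a := key' 0 m (by omega) (by omega) (by omega)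
    have b := key' 1 m (by omega) (by omega) (by omega)
    have c := key' 2 m (by omega) (by omega) (by omega)
    omega

set_option maxRecDepth 100000 in
lemma four_case : ∀ π : Equiv.Perm (Fin 4),
    (Fintype.card {t // OccA π t} = 1 ∧ Fintype.card {t // OccB π t} = 1) ↔
      π = w2413 ∨ π = w3142 := by
  decide +kernel

/-- Generating rule for `S_n(∅;{132,312})`, `n = m+1 ≥ 5`:
`S_n(∅;{132,312}) = φ(S_{n−1}(∅;{132,312})) ∪ Φ(S_{n−1}(∅;{132,312}))`;
moreover `S_4(∅;{132,312}) = {2413, 3142}`. -/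
theorem generating_rule_both_132_312 :
    (∀ m : ℕ, 5 ≤ m + 1 →
      SnContainBoth p132 p312 (m + 1) =
        phi '' SnContainBoth p132 p312 m ∪ Phi '' SnContainBoth p132 p312 m) ∧
    SnContainBoth p132 p312 4 = {w2413, w3142} := by
  refine ⟨fun m hm => ?_, ?_⟩
  · ext π
    constructor
    · intro h
      rcases last_extreme hm π h with h0 | h0
      · obtain ⟨σ, rfl⟩ := exists_phi π h0
        exact Or.inl ⟨σ, (phi_mem σ).1 h, rfl⟩
      · obtain ⟨σ, rfl⟩ := exists_Phi π h0
        exact Or.inr ⟨σ, (Phi_mem σ).1 h, rfl⟩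
    · rintro (⟨σ, h, rfl⟩ | ⟨σ, h, rfl⟩)
      · exact (phi_mem σ).2 h
      · exact (Phi_mem σ).2 h
  · ext π
    simp only [SnContainBoth, Set.mem_ofPred_eq, onceA, onceB, Set.mem_insert_iff,
      Set.mem_singleton_iff, Nat.card_eq_fintype_card]
    exact four_case π
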